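/- arXiv:1204.0078 — 5 statements merged into one kernel-verified Lean document; each statement's English description precedes it below -/
import Mathlib

section
/- Let (X, Σ, μ) be a subprobability space, let Q be an error-control family on X, and let P be a Q-acceptable partition of X. Let P_max ∈ P be an element of maximal measure, i.e., μ(P_max) = max{μ(P) : P ∈ P}, and let Q ∈ Q be chosen so that P_max ⊆ Q. Then h(μ; {Q} ∪ P_{X∖Q}) ≤ h(μ; P), where P_{X∖Q} = {P ∖ Q : P ∈ P}. -/
open MeasureTheory ENNReal Filter

/-- The Shannon function `sh x = -x * log₂ x` (with `sh 0 = 0`, since `log 0 = 0`). -/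
noncomputable def sh (x : ℝ) : ℝ := -x * Real.logb 2 x

/-- A (countable, ℕ-indexed) partition of `X` w.r.t. the measure `μ`:
measurable, pairwise disjoint sets whose union has null complement. -/
def IsPartition {X : Type*} [MeasurableSpace X] (μ : Measure X) (P : ℕ → Set X) : Prop :=
  (∀ i, MeasurableSet (P i)) ∧ Pairwise (Function.onFun Disjoint P) ∧
    μ (Set.univ \ ⋃ i, P i) = 0

/-- The entropy `h(μ; P) = Σ_i sh(μ(P_i)) ∈ [0,∞]` of a countable family of sets. -/
noncomputable def partEntropy {X : Type*} [MeasurableSpace X]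
    (μ : Measure X) (P : ℕ → Set X) : ℝ≥0∞ :=
  ∑' i, ENNReal.ofReal (sh ((μ (P i)).toReal))

/-- An error-control family: a family of measurable sets covering `X`. -/
def IsErrorControl {X : Type*} [MeasurableSpace X] (𝒬 : Set (Set X)) : Prop :=
  (∀ Q ∈ 𝒬, MeasurableSet Q) ∧ ⋃₀ 𝒬 = Set.univ

/-- `P` is `𝒬`-acceptable: every element of `P` is contained in some member of `𝒬`. -/
def Acceptable {X : Type*} (𝒬 : Set (Set X)) (P : ℕ → Set X) : Prop :=
  ∀ i, ∃ Q ∈ 𝒬, P i ⊆ Q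

/-- The entropy `H(μ; 𝒬)`: the infimum of entropies of `𝒬`-acceptable partitions
(`= ∞` if there is none). -/
noncomputable def coverEntropy {X : Type*} [MeasurableSpace X]
    (μ : Measure X) (𝒬 : Set (Set X)) : ℝ≥0∞ :=
  ⨅ (P : ℕ → Set X) (_ : IsPartition μ P) (_ : Acceptable 𝒬 P), partEntropy μ P

theorem sh_tangent (x y : ℝ) (hx : 0 ≤ x) (hy : 0 < y) :
    sh x ≤ sh y - (Real.log y + 1) / Real.log 2 * (x - y) := by
  have h2 : 0 < Real.log 2 := Real.log_pos (by norm_num)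
  have key : -x * Real.log x ≤ -y * Real.log y - (Real.log y + 1) * (x - y) := by
    rcases hx.eq_or_lt with rfl | hx
    · simp only [neg_zero, zero_mul]; nlinarith
    · have h := Real.log_le_sub_one_of_pos (div_pos hy hx)
      rw [Real.log_div hy.ne' hx.ne'] at h
      have h3 := mul_le_mul_of_nonneg_left h hx.le
      have h4 : x * (y / x - 1) = y - x := by field_simp
      rw [h4] at h3
      nlinarith
  unfold sh Real.logb
  have := div_le_div_of_nonneg_right key h2.le
  calc _ = -x * Real.log x / Real.log 2 := by ring
    _ ≤ _ := this
    _ = _ := by ring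

theorem sh_step (r p m : ℝ) (hr : 0 ≤ r) (hrp : r ≤ p) (hpm : p ≤ m) :
    sh r ≤ sh p + (Real.log m + 1) / Real.log 2 * (p - r) := by
  have h2 : 0 < Real.log 2 := Real.log_pos (by norm_num)
  rcases (hr.trans hrp).eq_or_lt with h | h
  · have : r = p := by linarith
    subst this; simp
  · have h1 := sh_tangent r p hr h
    have h3 : (Real.log p + 1) / Real.log 2 ≤ (Real.log m + 1) / Real.log 2 := by
      have := Real.log_le_log h hpm
      gcongr
    nlinarith [mul_le_mul_of_nonneg_right h3 (sub_nonneg.2 hrp)]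

theorem sh_nonneg (x : ℝ) (h0 : 0 ≤ x) (h1 : x ≤ 1) : 0 ≤ sh x := by
  unfold sh
  have : Real.logb 2 x ≤ 0 := by
    unfold Real.logb
    exact div_nonpos_of_nonpos_of_nonneg (Real.log_nonpos h0 h1) (Real.log_nonneg (by norm_num))
  nlinarith

theorem sh_zero : sh 0 = 0 := by simp [sh]

theorem sh_real_core (p r : ℕ → ℝ) (q : ℝ) (i₀ : ℕ) (hr : ∀ i, 0 ≤ r i) (hrp : ∀ i, r i ≤ p i)
    (hpm : ∀ i, p i ≤ p i₀) (hp1 : p i₀ ≤ 1) (hm : 0 < p i₀) (hr0 : r i₀ = 0) (hq0 : 0 ≤ q)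
    (hq : HasSum (fun i => p i - r i) q) (hs : Summable fun i => sh (p i)) :
    (Summable fun i => sh (r i)) ∧ sh q + ∑' i, sh (r i) ≤ ∑' i, sh (p i) := by
  have hc : HasSum (fun i => (Real.log (p i₀) + 1) / Real.log 2 * (p i - r i)) _ :=
    hq.mul_left ((Real.log (p i₀) + 1) / Real.log 2)
  have hstep := fun i => sh_step (r i) (p i) (p i₀) (hr i) (hrp i) (hpm i)
  have hsr : Summable fun i => sh (r i) :=
    Summable.of_nonneg_of_le
      (fun i => sh_nonneg _ (hr i) ((hrp i).trans ((hpm i).trans hp1))) hstep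
      (hs.add hc.summable)
  refine ⟨hsr, ?_⟩
  have hg := (hs.hasSum.add hc).sub hsr.hasSum
  have h := le_hasSum hg i₀ (fun j _ => sub_nonneg.2 (hstep j))
  have ht := sh_tangent q (p i₀) hq0 hm
  simp only [hr0, sh_zero] at h
  linarith

/-- Lemma II.1: if `P i₀` has maximal measure among the elements of the `𝒬`-acceptable
partition `P`, and `Q ∈ 𝒬` contains `P i₀`, then
`h(μ; {Q} ∪ P_{X∖Q}) ≤ h(μ; P)`. -/
theorem stmt_1 {X : Type*} [MeasurableSpace X] (μ : Measure X) (hμ : μ Set.univ ≤ 1)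
    (𝒬 : Set (Set X)) (h𝒬 : IsErrorControl 𝒬)
    (P : ℕ → Set X) (hP : IsPartition μ P) (hPQ : Acceptable 𝒬 P)
    (i₀ : ℕ) (hmax : ∀ i, μ (P i) ≤ μ (P i₀))
    (Q : Set X) (hQ : Q ∈ 𝒬) (hsub : P i₀ ⊆ Q) :
    partEntropy μ (fun i => match i with
      | 0 => Q
      | (j+1) => P j \ Q) ≤ partEntropy μ P := by
  obtain ⟨hm, hd, hn⟩ := hP
  have hQm := h𝒬.1 Q hQ
  have hfin : ∀ s, μ s ≠ ∞ := fun s =>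
    ((measure_mono (Set.subset_univ s)).trans hμ).trans_lt ENNReal.one_lt_top |>.ne
  have hle1 : ∀ s, (μ s).toReal ≤ 1 := fun s =>
    ENNReal.toReal_le_of_le_ofReal zero_le_one
      (by simpa using (measure_mono (Set.subset_univ s)).trans hμ)
  have hQsum : μ Q = ∑' i, μ (P i ∩ Q) := by
    rw [← measure_iUnion (fun i j hij => (hd hij).mono Set.inter_subset_left Set.inter_subset_left)
      (fun i => (hm i).inter hQm), ← Set.iUnion_inter, Set.inter_comm]
    symm
    apply measure_inter_conull'
    exact measure_mono_null (Set.sdiff_subset_sdiff_left (Set.subset_univ _)) hn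
  have hqr : ∀ i, (μ (P i ∩ Q)).toReal = (μ (P i)).toReal - (μ (P i \ Q)).toReal := by
    intro i
    rw [← measure_inter_add_sdiff (P i) hQm, ENNReal.toReal_add (hfin _) (hfin _)]
    ring
  have hq : HasSum (fun i => (μ (P i)).toReal - (μ (P i \ Q)).toReal) (μ Q).toReal := by
    simp_rw [← hqr]
    rw [hQsum, ENNReal.tsum_toReal_eq (fun _ => hfin _)]
    exact ENNReal.hasSum_toReal (hQsum ▸ hfin Q)
  have hsplit : partEntropy μ (fun i => match i with
      | 0 => Q
      | (j+1) => P j \ Q) = ENNReal.ofReal (sh (μ Q).toReal)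
        + ∑' i, ENNReal.ofReal (sh (μ (P i \ Q)).toReal) := by
    unfold partEntropy
    rw [tsum_eq_zero_add' ENNReal.summable]
  rw [hsplit]
  rcases eq_or_ne (μ (P i₀)) 0 with h0 | h0
  · have hz : ∀ i, μ (P i) = 0 := fun i => le_antisymm (h0 ▸ hmax i) bot_le
    have hz1 : ∀ i, μ (P i \ Q) = 0 := fun i => measure_mono_null Set.sdiff_subset (hz i)
    have hz2 : ∀ i, μ (P i ∩ Q) = 0 := fun i => measure_mono_null Set.inter_subset_left (hz i)
    have hQ0 : μ Q = 0 := by rw [hQsum]; simp [hz2]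
    simp [hQ0, hz1, sh_zero]
  by_cases htop : partEntropy μ P = ∞
  · rw [htop]; exact le_top
  have hnn : ∀ s, 0 ≤ sh (μ s).toReal := fun s => sh_nonneg _ ENNReal.toReal_nonneg (hle1 s)
  have hs : Summable fun i => sh (μ (P i)).toReal := by
    have := ENNReal.summable_toReal htop
    simpa [ENNReal.toReal_ofReal (hnn _)] using this
  obtain ⟨hsr, hmain⟩ := sh_real_core (fun i => (μ (P i)).toReal) (fun i => (μ (P i \ Q)).toReal)
    (μ Q).toReal i₀ (fun i => ENNReal.toReal_nonneg)
    (fun i => ENNReal.toReal_mono (hfin _) (measure_mono Set.sdiff_subset))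
    (fun i => ENNReal.toReal_mono (hfin _) (hmax i)) (hle1 _)
    (ENNReal.toReal_pos h0 (hfin _)) (by simp [Set.sdiff_eq_empty.2 hsub])
    ENNReal.toReal_nonneg hq hs
  unfold partEntropy
  rw [← ENNReal.ofReal_tsum_of_nonneg (fun i => hnn _) hsr,
    ← ENNReal.ofReal_tsum_of_nonneg (fun i => hnn _) hs,
    ← ENNReal.ofReal_add (hnn _) (tsum_nonneg fun i => hnn _)]
  exact ENNReal.ofReal_le_ofReal hmain
end

section
/- Let (X, Σ, μ) be a subprobability space and let P be a partition of X. Let (R_i)_{i∈ℕ} be a sequence of pairwise disjoint measurable subsets of X such that for every i ∈ ℕ and every P ∈ P, μ(R_i) ≥ μ(P ∩ X_i), where X_0 = X and X_i = X ∖ (R_0 ∪ … ∪ R_{i−1}) for i ≥ 1. Then μ(X ∖ ⋃_{i∈ℕ} R_i) = 0; in particular, the family {R_i : i ∈ ℕ} is a partition of X. -/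
open MeasureTheory ENNReal Filter

/-- Theorem II.1 (abstract form): if `R` is a sequence of pairwise disjoint measurable
sets such that at every stage `i`, `μ(R i)` dominates `μ(P ∩ X_i)` for every element `P`
of the partition `P`, where `X_i = X ∖ (R_0 ∪ … ∪ R_{i-1})`, then `R` covers `X` up to a
null set; in particular `R` is a partition of `X`. -/
theorem stmt_2 {X : Type*} [MeasurableSpace X] (μ : Measure X) (hμ : μ Set.univ ≤ 1)
    (P : ℕ → Set X) (hP : IsPartition μ P)
    (R : ℕ → Set X) (hRmeas : ∀ i, MeasurableSet (R i))
    (hRdisj : Pairwise (Function.onFun Disjoint R))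
    (hmaj : ∀ i j,
      μ (P j ∩ (Set.univ \ ⋃ l ∈ Finset.range i, R l)) ≤ μ (R i)) :
    μ (Set.univ \ ⋃ i, R i) = 0 ∧ IsPartition μ R := by
  have key : μ (Set.univ \ ⋃ i, R i) = 0 := by
    have hsum : ∑' i, μ (R i) ≠ ∞ := by
      rw [← measure_iUnion hRdisj hRmeas]
      exact ((measure_mono (Set.subset_univ _)).trans hμ).trans_lt ENNReal.one_lt_top |>.ne
    have ht : Tendsto (fun i => μ (R i)) atTop (nhds 0) :=
      ENNReal.tendsto_atTop_zero_of_tsum_ne_top hsum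
    have hj : ∀ j, μ (P j ∩ (Set.univ \ ⋃ i, R i)) = 0 := by
      intro j
      refine le_antisymm (ge_of_tendsto' ht fun i => ?_) zero_le
      refine (measure_mono ?_).trans (hmaj i j)
      refine Set.inter_subset_inter_right _ (Set.sdiff_subset_sdiff_right ?_)
      exact Set.iUnion₂_subset fun l _ => Set.subset_iUnion R l
    refine measure_mono_null ?_ (measure_union_null hP.2.2 (measure_iUnion_null hj))
    intro x hx
    by_cases h : x ∈ ⋃ i, P i
    · obtain ⟨j, hxj⟩ := Set.mem_iUnion.1 h
      exact Or.inr (Set.mem_iUnion.2 ⟨j, hxj, hx⟩)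
    · exact Or.inl ⟨trivial, h⟩
  exact ⟨key, hRmeas, hRdisj, key⟩
end

section
/- Let (X, Σ, μ) be a subprobability space and let Q be an error-control family on X. Then H(μ; Q) = inf{ h(μ; P) ∈ [0, ∞] : P is a partition of X, P ≺ Q, and every element of P belongs to the sigma algebra generated by Q }. -/
open MeasureTheory ENNReal Filter

lemma measure_eq_tsum_inter {X : Type*} [MeasurableSpace X] {μ : Measure X} {P : ℕ → Set X}
    (hP : IsPartition μ P) {A : Set X} (hA : MeasurableSet A) :
    μ A = ∑' j, μ (A ∩ P j) := by
  obtain ⟨hm, hd, h0⟩ := hP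
  rw [← measure_iUnion (fun i j hij => (hd hij).mono Set.inter_subset_right Set.inter_subset_right)
    (fun j => hA.inter (hm j)), ← Set.inter_iUnion]
  refine le_antisymm ?_ (measure_mono Set.inter_subset_left)
  calc μ A ≤ μ ((A ∩ ⋃ j, P j) ∪ (Set.univ \ ⋃ i, P i)) := by
        apply measure_mono
        intro x hx
        by_cases h : x ∈ ⋃ j, P j
        · exact Or.inl ⟨hx, h⟩
        · exact Or.inr ⟨trivial, h⟩
    _ ≤ μ (A ∩ ⋃ j, P j) + μ (Set.univ \ ⋃ i, P i) := measure_union_le _ _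
    _ = _ := by rw [h0, add_zero]

lemma gibbs_real {r p : ℝ} (hr : 0 < r) (hp : 0 < p) :
    sh r + r * (1 / Real.log 2) ≤ r * (-Real.logb 2 p) + p * (1 / Real.log 2) := by
  have hl : 0 < Real.log 2 := Real.log_pos (by norm_num)
  have h1 : Real.log (p / r) ≤ p / r - 1 := Real.log_le_sub_one_of_pos (by positivity)
  rw [Real.log_div hp.ne' hr.ne'] at h1
  have h2 : r * (Real.log p - Real.log r) ≤ p - r := by
    calc r * (Real.log p - Real.log r) ≤ r * (p / r - 1) := by gcongr
      _ = p - r := by field_simp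
  unfold sh Real.logb
  have : (r * (-(Real.log p / Real.log 2)) + p * (1 / Real.log 2))
      - (-r * (Real.log r / Real.log 2) + r * (1 / Real.log 2))
      = ((p - r) - r * (Real.log p - Real.log r)) / Real.log 2 := by
    field_simp
    ring
  have h3 : 0 ≤ ((p - r) - r * (Real.log p - Real.log r)) / Real.log 2 :=
    div_nonneg (by linarith) hl.le
  linarith

lemma sh_eq_mul {p : ℝ≥0∞} (hp : p ≤ 1) :
    ENNReal.ofReal (sh p.toReal) = p * ENNReal.ofReal (-Real.logb 2 p.toReal) := by
  have hp' : p ≠ ⊤ := ne_top_of_le_ne_top one_ne_top hp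
  conv_rhs => rw [← ENNReal.ofReal_toReal hp']
  rw [← ENNReal.ofReal_mul toReal_nonneg, ENNReal.toReal_ofReal toReal_nonneg]
  unfold sh
  ring_nf

lemma gibbs_enn {r p : ℝ≥0∞} (hr : r ≤ 1) (hp : p ≤ 1) (h : r ≠ 0 → p ≠ 0) :
    ENNReal.ofReal (sh r.toReal) + r * ENNReal.ofReal (1 / Real.log 2) ≤
      r * ENNReal.ofReal (-Real.logb 2 p.toReal) + p * ENNReal.ofReal (1 / Real.log 2) := by
  by_cases hr0 : r = 0
  · simp [hr0, sh]
  have hp0 := h hr0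
  have hp' : p ≠ ⊤ := ne_top_of_le_ne_top one_ne_top hp
  have hr' : r ≠ ⊤ := ne_top_of_le_ne_top one_ne_top hr
  have hl : 0 < Real.log 2 := Real.log_pos (by norm_num)
  lift p to NNReal using hp'
  lift r to NNReal using hr'
  have hp1 : (p : ℝ) ≤ 1 := by exact_mod_cast hp
  have hr1 : (r : ℝ) ≤ 1 := by exact_mod_cast hr
  have hp2 : (0 : ℝ) < p := by
    have : p ≠ 0 := by simpa using hp0
    exact_mod_cast pos_iff_ne_zero.mpr this
  have hr2 : (0 : ℝ) < r := by
    have : r ≠ 0 := by simpa using hr0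
    exact_mod_cast pos_iff_ne_zero.mpr this
  have n1 : 0 ≤ -Real.logb 2 p :=
    neg_nonneg.mpr (Real.logb_nonpos (by norm_num) hp2.le hp1)
  have n2 : 0 ≤ sh r := by
    have : 0 ≤ -Real.logb 2 r :=
      neg_nonneg.mpr (Real.logb_nonpos (by norm_num) hr2.le hr1)
    unfold sh
    nlinarith
  have e := gibbs_real hr2 hp2
  rw [← ENNReal.ofReal_coe_nnreal (p := p), ← ENNReal.ofReal_coe_nnreal (p := r)]
  rw [ENNReal.toReal_ofReal hr2.le, ENNReal.toReal_ofReal hp2.le,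
    ← ENNReal.ofReal_mul hr2.le, ← ENNReal.ofReal_mul hr2.le, ← ENNReal.ofReal_mul hp2.le,
    ← ENNReal.ofReal_add n2 (by positivity), ← ENNReal.ofReal_add (by positivity) (by positivity)]
  exact ENNReal.ofReal_le_ofReal e

lemma exists_better {X : Type*} [MeasurableSpace X] (μ : Measure X) (hμ : μ Set.univ ≤ 1)
    (𝒬 : Set (Set X)) (h𝒬 : IsErrorControl 𝒬) (P : ℕ → Set X) (hP : IsPartition μ P)
    (hA : Acceptable 𝒬 P) :
    ∃ R : ℕ → Set X, IsPartition μ R ∧ Acceptable 𝒬 R ∧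
      (∀ i, MeasurableSet[MeasurableSpace.generateFrom 𝒬] (R i)) ∧
      partEntropy μ R ≤ partEntropy μ P := by
  choose Q hQ hPQ using hA
  have hle : ∀ A, μ A ≤ 1 := fun A => (measure_mono (Set.subset_univ A)).trans hμ
  have hsumP : ∑' i, μ (P i) = μ Set.univ := by
    rw [measure_eq_tsum_inter hP MeasurableSet.univ]
    simp
  let B : ℕ → ℕ → Prop := fun j i => μ (P i) < μ (P j) ∨ (μ (P i) = μ (P j) ∧ j < i)
  let R : ℕ → Set X := fun i => Q i \ ⋃ (j : ℕ) (_ : B j i), Q j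
  have hRg : ∀ i, MeasurableSet[MeasurableSpace.generateFrom 𝒬] (R i) := by
    intro i
    refine MeasurableSet.diff (MeasurableSpace.measurableSet_generateFrom (hQ i)) ?_
    exact MeasurableSet.iUnion fun j => MeasurableSet.iUnion fun _ =>
      MeasurableSpace.measurableSet_generateFrom (hQ j)
  have hgen : MeasurableSpace.generateFrom 𝒬 ≤ ‹MeasurableSpace X› :=
    MeasurableSpace.generateFrom_le h𝒬.1
  have hmemR : ∀ i x, x ∈ R i → x ∈ Q i ∧ ∀ j, x ∈ Q j → ¬ B j i := by
    intro i x hx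
    refine ⟨hx.1, fun j hj hB => hx.2 ?_⟩
    exact Set.mem_iUnion₂.mpr ⟨j, hB, hj⟩
  have hcover : ∀ k, P k ⊆ ⋃ i, R i := by
    intro k x hx
    have hxk := hPQ k hx
    -- a maximum of `μ (P i)` over the indices with `x ∈ Q i`
    have hmax : ∃ m, x ∈ Q m ∧ ∀ i, x ∈ Q i → μ (P i) ≤ μ (P m) := by
      by_cases h0 : ∃ i, x ∈ Q i ∧ μ (P i) ≠ 0
      · obtain ⟨i0, hi0, hi1⟩ := h0
        have hfin : {i | μ (P i0) ≤ μ (P i)}.Finite :=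
          ENNReal.finite_const_le_of_tsum_ne_top
            (by rw [hsumP]; exact ne_top_of_le_ne_top one_ne_top hμ) hi1
        obtain ⟨m, hm, hm'⟩ := Set.exists_max_image
          ({i | μ (P i0) ≤ μ (P i)} ∩ {i | x ∈ Q i}) (fun i => μ (P i))
          (hfin.inter_of_left _) ⟨i0, le_refl (μ (P i0)), hi0⟩
        refine ⟨m, hm.2, fun i hi => ?_⟩
        rcases le_total (μ (P i0)) (μ (P i)) with h | h
        · exact hm' i ⟨h, hi⟩
        · exact h.trans hm.1
      · push Not at h0
        exact ⟨k, hxk, fun i hi => by rw [h0 i hi]; exact zero_le⟩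
    classical
    obtain ⟨hn, hn'⟩ := Nat.find_spec hmax
    refine Set.mem_iUnion.mpr ⟨Nat.find hmax, hn, ?_⟩
    intro hx
    obtain ⟨j, hB, hj⟩ := Set.mem_iUnion₂.mp hx
    rcases hB with h | ⟨h, hlt⟩
    · exact absurd (hn' j hj) (not_le.mpr h)
    · exact Nat.find_min hmax hlt ⟨hj, fun i hi => h ▸ hn' i hi⟩
  have hRP : IsPartition μ R := by
    refine ⟨fun i => hgen _ (hRg i), ?_, ?_⟩
    · intro i j hij
      refine Set.disjoint_left.mpr fun x hxi hxj => ?_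
      obtain ⟨a, b⟩ := hmemR i x hxi
      obtain ⟨c, d⟩ := hmemR j x hxj
      have h1 := b j c
      have h2 := d i a
      simp only [B, not_or, not_and, not_lt] at h1 h2
      have e := le_antisymm h1.1 h2.1
      exact hij (le_antisymm (h1.2 e.symm) (h2.2 e))
    · refine measure_mono_null ?_ hP.2.2
      exact Set.sdiff_subset_sdiff_right (Set.iUnion_subset hcover)
  refine ⟨R, hRP, fun i => ⟨Q i, hQ i, Set.sdiff_subset⟩, hRg, ?_⟩
  have hsumR : ∑' i, μ (R i) = μ Set.univ := by
    rw [measure_eq_tsum_inter hRP MeasurableSet.univ]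
    simp
  have hij : ∀ i j, μ (R i ∩ P j) ≠ 0 → μ (P j) ≠ 0 ∧ μ (P j) ≤ μ (P i) := by
    intro i j h
    refine ⟨fun h0 => h (measure_mono_null Set.inter_subset_right h0), ?_⟩
    obtain ⟨x, hx⟩ := nonempty_of_measure_ne_zero h
    have := (hmemR i x hx.1).2 j (hPQ j hx.2)
    simp only [B, not_or, not_lt] at this
    exact this.1
  let c : ℕ → ℝ≥0∞ := fun i => ENNReal.ofReal (-Real.logb 2 (μ (P i)).toReal)
  let L : ℝ≥0∞ := ENNReal.ofReal (1 / Real.log 2)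
  have hcross : ∑' i, μ (R i) * c i ≤ partEntropy μ P := by
    calc ∑' i, μ (R i) * c i = ∑' i, ∑' j, μ (R i ∩ P j) * c i := by
          refine tsum_congr fun i => ?_
          rw [ENNReal.tsum_mul_right, ← measure_eq_tsum_inter hP (hRP.1 i)]
      _ ≤ ∑' i, ∑' j, μ (R i ∩ P j) * c j := by
          refine ENNReal.tsum_le_tsum fun i => ENNReal.tsum_le_tsum fun j => ?_
          by_cases h : μ (R i ∩ P j) = 0
          · simp [h]
          obtain ⟨h1, h2⟩ := hij i j h
          have ht : ∀ k, μ (P k) ≠ ⊤ := fun k => ne_top_of_le_ne_top one_ne_top (hle _)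
          refine mul_le_mul_right (ENNReal.ofReal_le_ofReal (neg_le_neg ?_)) _
          exact Real.logb_le_logb_of_le (by norm_num) (ENNReal.toReal_pos h1 (ht j))
            (ENNReal.toReal_mono (ht i) h2)
      _ = ∑' j, ∑' i, μ (R i ∩ P j) * c j := ENNReal.tsum_comm
      _ = ∑' j, μ (P j) * c j := by
          refine tsum_congr fun j => ?_
          rw [ENNReal.tsum_mul_right, measure_eq_tsum_inter hRP (hP.1 j)]
          simp only [Set.inter_comm]
      _ = partEntropy μ P := tsum_congr fun j => (sh_eq_mul (hle _)).symm
  have hpos : ∀ i, μ (R i) ≠ 0 → μ (P i) ≠ 0 := by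
    intro i hi h0
    apply hi
    rw [measure_eq_tsum_inter hP (hRP.1 i), ENNReal.tsum_eq_zero]
    intro j
    by_contra h
    obtain ⟨h1, h2⟩ := hij i j h
    rw [h0] at h2
    exact h1 (le_antisymm h2 zero_le)
  have hfinal : partEntropy μ R + μ Set.univ * L ≤ partEntropy μ P + μ Set.univ * L := by
    calc partEntropy μ R + μ Set.univ * L
        = ∑' i, (ENNReal.ofReal (sh (μ (R i)).toReal) + μ (R i) * L) := by
          rw [ENNReal.tsum_add, ENNReal.tsum_mul_right, hsumR]; rfl
      _ ≤ ∑' i, (μ (R i) * c i + μ (P i) * L) :=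
          ENNReal.tsum_le_tsum fun i => gibbs_enn (hle _) (hle _) (hpos i)
      _ = ∑' i, μ (R i) * c i + μ Set.univ * L := by
          rw [ENNReal.tsum_add, ENNReal.tsum_mul_right, hsumP]
      _ ≤ _ := by gcongr
  refine (ENNReal.add_le_add_iff_right ?_).mp hfinal
  exact ENNReal.mul_ne_top (ne_top_of_le_ne_top one_ne_top hμ) ENNReal.ofReal_ne_top

/-- Corollary III.1: `H(μ; 𝒬)` equals the infimum of entropies over `𝒬`-acceptable
partitions all of whose elements lie in the σ-algebra generated by `𝒬`. -/
theorem stmt_4 {X : Type*} [MeasurableSpace X] (μ : Measure X) (hμ : μ Set.univ ≤ 1)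
    (𝒬 : Set (Set X)) (h𝒬 : IsErrorControl 𝒬) :
    coverEntropy μ 𝒬 =
      ⨅ (P : ℕ → Set X) (_ : IsPartition μ P) (_ : Acceptable 𝒬 P)
        (_ : ∀ i, MeasurableSet[MeasurableSpace.generateFrom 𝒬] (P i)),
        partEntropy μ P := by
  apply le_antisymm
  · refine le_iInf fun P => le_iInf fun h1 => le_iInf fun h2 => le_iInf fun _ => ?_
    exact iInf_le_of_le P (iInf_le_of_le h1 (iInf_le_of_le h2 le_rfl))
  · refine le_iInf fun P => le_iInf fun h1 => le_iInf fun h2 => ?_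
    obtain ⟨R, r1, r2, r3, r4⟩ := exists_better μ hμ 𝒬 h𝒬 P h1 h2
    exact iInf_le_of_le R (iInf_le_of_le r1 (iInf_le_of_le r2 (iInf_le_of_le r3 r4)))
end

section
/- Let X = (0,1) with the Borel sigma algebra and Lebesgue measure λ, and let Q = { [a,b] : 0 < a < b < 1 } be the error-control family of all closed subintervals of (0,1). Then H(λ; Q) = 0, yet h(λ; P) > 0 for every Q-acceptable partition P of X; hence the infimum defining H(λ; Q) is not attained on any partition. -/
open MeasureTheory ENNReal Filter

/-- Lebesgue measure on the open unit interval `(0,1)`, viewed as a subtype of `ℝ`. -/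
noncomputable def lam : Measure (Set.Ioo (0:ℝ) 1) :=
  MeasureTheory.volume.comap Subtype.val

/-- The error-control family of all closed subintervals `[a,b]` with `0 < a < b < 1`. -/
def closedIntervals : Set (Set (Set.Ioo (0:ℝ) 1)) :=
  {S | ∃ a b : ℝ, 0 < a ∧ a < b ∧ b < 1 ∧
    S = (Subtype.val : Set.Ioo (0:ℝ) 1 → ℝ) ⁻¹' Set.Icc a b}

lemma lam_apply (S : Set (Set.Ioo (0:ℝ) 1)) : lam S = volume (Subtype.val '' S) :=
  comap_subtype_coe_apply measurableSet_Ioo _ _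

lemma lam_le_one (S : Set (Set.Ioo (0:ℝ) 1)) : lam S ≤ 1 := by
  rw [lam_apply]
  calc volume (Subtype.val '' S) ≤ volume (Set.Ioo (0:ℝ) 1) := by
        apply measure_mono
        rintro _ ⟨x, _, rfl⟩
        exact x.2
    _ = 1 := by simp

lemma lam_univ : lam Set.univ = 1 := by
  rw [lam_apply, Set.image_univ, Subtype.range_coe]; simp

lemma half_le_log_two : (1:ℝ)/2 ≤ Real.log 2 := by
  have := Real.log_two_gt_d9
  linarith

lemma sh_le_aux {x c : ℝ} (hc : 0 ≤ c) (h : -x * Real.log x ≤ c) : sh x ≤ 2 * c := by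
  unfold sh Real.logb
  have := half_le_log_two
  rw [← mul_div_assoc, div_le_iff₀ (by linarith)]
  nlinarith

lemma sh_le_one_sub {x : ℝ} (h0 : 0 ≤ x) (h1 : x ≤ 1) : sh x ≤ 2 * (1 - x) := by
  apply sh_le_aux (by linarith)
  rcases h0.eq_or_lt with rfl | h0
  · simp
  have := Real.one_sub_inv_le_log_of_pos h0
  have h2 := mul_le_mul_of_nonneg_left this h0.le
  have : x * (1 - x⁻¹) = x - 1 := by field_simp
  linarith

lemma sh_le_sqrt {x s : ℝ} (h0 : 0 ≤ x) (hs : 0 ≤ s) (hx : x ≤ s ^ 2) : sh x ≤ 4 * s := by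
  have : sh x ≤ 2 * (2 * Real.sqrt x) := by
    apply sh_le_aux (by positivity)
    rcases h0.eq_or_lt with rfl | h0
    · simp
    have hp : 0 < Real.sqrt x := Real.sqrt_pos.2 h0
    have h1 := Real.one_sub_inv_le_log_of_pos hp
    have h2 : Real.log x = 2 * Real.log (Real.sqrt x) := by
      rw [Real.log_sqrt h0.le]; ring
    have hx2 : x = Real.sqrt x * Real.sqrt x := (Real.mul_self_sqrt h0.le).symm
    rw [h2]
    generalize Real.sqrt x = r at *
    subst hx2
    have h3 := mul_le_mul_of_nonneg_left h1 (mul_self_nonneg r)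
    have : r * r * (1 - r⁻¹) = r * r - r := by field_simp
    nlinarith
  have h2 : Real.sqrt x ≤ s := Real.sqrt_le_iff.2 ⟨hs, hx⟩
  linarith

/-- Layers by distance from the boundary. -/
def layer (e : ℝ) (k : ℕ) : Set (Set.Ioo (0:ℝ) 1) :=
  (fun x : Set.Ioo (0:ℝ) 1 => min (x:ℝ) (1 - x)) ⁻¹' Set.Ioc (e ^ (k+1)) (e ^ k)

lemma layer_partition {e : ℝ} (h0 : 0 < e) (h1 : e < 1/2) : IsPartition lam (layer e) := by
  refine ⟨fun k => ?_, ?_, ?_⟩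
  · have : Measurable (fun x : Set.Ioo (0:ℝ) 1 => min (x:ℝ) (1 - x)) := by fun_prop
    exact this measurableSet_Ioc
  · have key : ∀ i j, i < j → Disjoint (layer e i) (layer e j) := by
      intro i j hij
      rw [Set.disjoint_left]
      intro x hx hy
      have : e ^ j ≤ e ^ (i+1) := pow_le_pow_of_le_one h0.le (by linarith) hij
      have a := hx.1
      have b := hy.2
      linarith
    intro i j hij
    rcases lt_or_gt_of_ne hij with h | h
    · exact key _ _ h
    · exact (key _ _ h).symm
  · have : (⋃ i, layer e i) = Set.univ := by
      rw [Set.eq_univ_iff_forall]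
      intro x
      have hx := x.2
      obtain ⟨n, hn⟩ := exists_nat_pow_near_of_lt_one (x := min (x:ℝ) (1 - x)) (y := e)
        (lt_min hx.1 (by linarith [hx.2])) ((min_le_left _ _).trans hx.2.le) h0 (by linarith)
      exact Set.mem_iUnion.2 ⟨n, hn⟩
    simp [this]

lemma layer_acceptable {e : ℝ} (h0 : 0 < e) (h1 : e < 1/2) :
    Acceptable closedIntervals (layer e) := by
  intro k
  have h2 : e ^ (k+1) ≤ e := by
    simpa using pow_le_pow_of_le_one h0.le (by linarith) (show 1 ≤ k+1 by omega)
  have h3 : 0 < e ^ (k+1) := by positivity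
  refine ⟨_, ⟨e ^ (k+1), 1 - e ^ (k+1), h3, by linarith, by linarith, rfl⟩, ?_⟩
  intro x hx
  have a := lt_min_iff.1 hx.1
  exact ⟨a.1.le, by linarith [a.2]⟩

lemma layer_upper {e : ℝ} (h0 : 0 < e) (k : ℕ) : (lam (layer e k)).toReal ≤ 2 * e ^ k := by
  have hk : 0 < e ^ k := by positivity
  apply ENNReal.toReal_le_of_le_ofReal (by positivity)
  rw [lam_apply]
  calc volume (Subtype.val '' layer e k)
      ≤ volume (Set.Icc 0 (e ^ k) ∪ Set.Icc (1 - e ^ k) 1) := by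
        apply measure_mono
        rintro _ ⟨x, hx, rfl⟩
        rcases min_le_iff.1 hx.2 with h | h
        · exact Or.inl ⟨x.2.1.le, h⟩
        · exact Or.inr ⟨by linarith, x.2.2.le⟩
    _ ≤ _ := measure_union_le _ _
    _ = ENNReal.ofReal (2 * e ^ k) := by
        rw [Real.volume_Icc, Real.volume_Icc, ← ENNReal.ofReal_add (by linarith) (by linarith)]
        congr 1; ring

lemma layer_lower {e : ℝ} (h0 : 0 < e) : 1 - 2 * e ≤ (lam (layer e 0)).toReal := by
  rw [← ENNReal.ofReal_le_iff_le_toReal (ne_top_of_le_ne_top one_ne_top (lam_le_one _)), lam_apply]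
  calc ENNReal.ofReal (1 - 2 * e) = volume (Set.Ioo e (1 - e)) := by
        rw [Real.volume_Ioo]; congr 1; ring
    _ ≤ _ := by
        apply measure_mono
        intro x hx
        have h : x ∈ Set.Ioo (0:ℝ) 1 := ⟨by linarith [hx.1], by linarith [hx.2]⟩
        refine ⟨⟨x, h⟩, ⟨?_, ?_⟩, rfl⟩
        · simpa using ⟨hx.1, by linarith [hx.2]⟩
        · simpa using Or.inl h.2.le

lemma layer_entropy {d : ℝ} (h0 : 0 < d) (h1 : d ≤ 1/2) :
    partEntropy lam (layer (d ^ 2)) ≤ ENNReal.ofReal (32 * d) := by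
  have hb : ∀ k, sh (lam (layer (d ^ 2) k)).toReal ≤ 16 * d * (1/2) ^ k := by
    intro k
    have hle : (lam (layer (d ^ 2) k)).toReal ≤ 1 :=
      ENNReal.toReal_le_of_le_ofReal zero_le_one (by simpa using lam_le_one _)
    cases k with
    | zero =>
      have := sh_le_one_sub ENNReal.toReal_nonneg hle
      have := layer_lower (e := d ^ 2) (by positivity)
      simp only [pow_zero]
      nlinarith
    | succ k =>
      have hu := layer_upper (e := d ^ 2) (by positivity) (k+1)
      have := sh_le_sqrt (s := 2 * d ^ (k+1)) ENNReal.toReal_nonneg (by positivity)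
        (hu.trans (by
          have : 0 < (d ^ 2) ^ (k+1) := by positivity
          have h : (2 * d ^ (k+1)) ^ 2 = 4 * (d ^ 2) ^ (k+1) := by ring
          linarith))
      have h2 : d ^ k ≤ (1/2) ^ k := pow_le_pow_left₀ h0.le h1 k
      have h3 := mul_le_mul_of_nonneg_left h2 h0.le
      rw [pow_succ d k] at this
      rw [pow_succ (1/2 : ℝ) k]
      linarith
  have hs : Summable (fun k : ℕ => 16 * d * (1/2 : ℝ) ^ k) := summable_geometric_two.mul_left _
  calc partEntropy lam (layer (d ^ 2)) ≤ ∑' k : ℕ, ENNReal.ofReal (16 * d * (1/2 : ℝ) ^ k) :=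
        ENNReal.tsum_le_tsum fun k => ENNReal.ofReal_le_ofReal (hb k)
    _ = ENNReal.ofReal (∑' k : ℕ, 16 * d * (1/2 : ℝ) ^ k) :=
        (ENNReal.ofReal_tsum_of_nonneg (fun k => by positivity) hs).symm
    _ = ENNReal.ofReal (32 * d) := by
        rw [tsum_mul_left, tsum_geometric_two]; congr 1; ring

/-- Example III.1: on `X = (0,1)` with Lebesgue measure `λ` and the error-control family
`𝒬` of all closed subintervals, `H(λ; 𝒬) = 0`, yet every `𝒬`-acceptable partition has
strictly positive entropy; hence the infimum defining `H(λ; 𝒬)` is not attained. -/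
theorem stmt_7 :
    coverEntropy lam closedIntervals = 0 ∧
      ∀ P : ℕ → Set (Set.Ioo (0:ℝ) 1),
        IsPartition lam P → Acceptable closedIntervals P →
          0 < partEntropy lam P := by
  constructor
  · rw [← nonpos_iff_eq_zero]
    apply ENNReal.le_of_forall_pos_le_add
    intro c hc _
    have hc' : (0:ℝ) < c := hc
    set d : ℝ := min (1/2) ((c:ℝ) / 32) with hd
    have hd0 : 0 < d := lt_min (by norm_num) (by positivity)
    have hd1 : d ≤ 1/2 := min_le_left _ _
    have hd2 : d ≤ (c:ℝ) / 32 := min_le_right _ _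
    have he : d ^ 2 < 1/2 := by nlinarith
    have he0 : 0 < d ^ 2 := by positivity
    calc coverEntropy lam closedIntervals ≤ partEntropy lam (layer (d ^ 2)) :=
          iInf_le_of_le _ (iInf_le_of_le (layer_partition he0 he)
            (iInf_le_of_le (layer_acceptable he0 he) le_rfl))
      _ ≤ ENNReal.ofReal (32 * d) := layer_entropy hd0 hd1
      _ ≤ ENNReal.ofReal c := ENNReal.ofReal_le_ofReal (by linarith)
      _ = 0 + c := by simp
  · intro P hP hA
    have hex : ∃ i, lam (P i) ≠ 0 := by
      by_contra! h
      have h1 : lam (⋃ i, P i) = 0 := measure_iUnion_null h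
      have h2 : lam Set.univ ≤ lam (⋃ i, P i) + lam (Set.univ \ ⋃ i, P i) := by
        refine (measure_mono ?_).trans (measure_union_le _ _)
        simp
      rw [h1, hP.2.2, lam_univ] at h2
      simp at h2
    obtain ⟨i, hi⟩ := hex
    obtain ⟨Q, ⟨a, b, ha, hab, hb, rfl⟩, hPQ⟩ := hA i
    have hle : (lam (P i)).toReal ≤ b - a := by
      apply ENNReal.toReal_le_of_le_ofReal (by linarith)
      rw [lam_apply, ← Real.volume_Icc]
      apply measure_mono
      rintro _ ⟨x, hx, rfl⟩
      exact hPQ hx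
    have hpos : 0 < (lam (P i)).toReal :=
      ENNReal.toReal_pos hi (ne_top_of_le_ne_top one_ne_top (lam_le_one _))
    have hsh : 0 < sh (lam (P i)).toReal := by
      unfold sh
      have := Real.logb_neg (b := 2) (by norm_num) hpos (by linarith)
      nlinarith
    exact (ENNReal.ofReal_pos.2 hsh).trans_le (ENNReal.le_tsum i)
end

section
/- Let (X, Σ, μ) be a subprobability space and let P = {P_i}_{i=1}^{∞} be a partition of X with h(μ; P) < ∞ such that μ(P_1) = max{μ(P_i) : i ∈ ℕ}. Let Q be a measurable set with P_1 ⊆ Q, and for k ∈ ℕ set Q_k = ⋃_{i=1}^{k} (P_i ∩ Q). Then for every k ∈ ℕ: sh(μ(Q_k)) + Σ_{i≥2} sh(μ(P_i ∖ Q_k)) ≥ sh(μ(Q_{k+1})) + Σ_{i≥2} sh(μ(P_i ∖ Q_{k+1})); that is, h(μ; {Q_k} ∪ P_{X∖Q_k}) ≥ h(μ; {Q_{k+1}} ∪ P_{X∖Q_{k+1}}). -/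
open MeasureTheory ENNReal Filter

lemma sh_eq_aux (x : ℝ) : sh x = Real.negMulLog x / Real.log 2 := by
  unfold sh Real.negMulLog Real.logb
  ring

lemma sh_nonneg_aux {x : ℝ} (h0 : 0 ≤ x) (h1 : x ≤ 1) : 0 ≤ sh x := by
  rw [sh_eq_aux]
  exact div_nonneg (Real.negMulLog_nonneg h0 h1) (Real.log_nonneg (by norm_num))

lemma sh_exchange_aux {q p a : ℝ} (ha : 0 ≤ a) (hap : a ≤ p) (hpq : p ≤ q) :
    sh (q + a) + sh (p - a) ≤ sh q + sh p := by
  rcases ha.eq_or_lt with rfl | ha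
  · simp
  have hd : 0 < q - p + 2 * a := by linarith
  have hc := Real.concaveOn_negMulLog
  set t := a / (q - p + 2 * a) with ht
  have htd : t * (q - p + 2 * a) = a := by rw [ht]; exact div_mul_cancel₀ a hd.ne'
  have ht0 : 0 ≤ t := by positivity
  have ht1 : 0 ≤ 1 - t := by
    have : t ≤ 1 := by rw [ht, div_le_one hd]; linarith
    linarith
  have hx : (p - a) ∈ Set.Ici (0 : ℝ) := by simp; linarith
  have hy : (q + a) ∈ Set.Ici (0 : ℝ) := by simp; linarith
  have h1 := hc.2 hx hy ht1 ht0 (by ring)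
  have h2 := hc.2 hx hy ht0 ht1 (by ring)
  simp only [smul_eq_mul] at h1 h2
  rw [show (1 - t) * (p - a) + t * (q + a) = p by linear_combination htd] at h1
  rw [show t * (p - a) + (1 - t) * (q + a) = q by linear_combination -htd] at h2
  simp only [sh_eq_aux, ← add_div]
  apply div_le_div_of_nonneg_right _ (Real.log_nonneg (by norm_num))
  linarith

/-- Step (12) of Lemma II.1: with `P 0` of maximal measure, `P 0 ⊆ Q`, and
`Q_k = ⋃_{i ≤ k} (P i ∩ Q)`, the entropy of `{Q_k} ∪ P_{X∖Q_k}` is nonincreasing in `k`: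
`sh(μ Q_k) + Σ_{i≥1} sh(μ(P i ∖ Q_k)) ≥ sh(μ Q_{k+1}) + Σ_{i≥1} sh(μ(P i ∖ Q_{k+1}))`. -/
theorem stmt_8 {X : Type*} [MeasurableSpace X] (μ : Measure X) (hμ : μ Set.univ ≤ 1)
    (P : ℕ → Set X) (hP : IsPartition μ P) (hfin : partEntropy μ P ≠ ⊤)
    (hmax : ∀ i, μ (P i) ≤ μ (P 0))
    (Q : Set X) (hQ : MeasurableSet Q) (hsub : P 0 ⊆ Q) (k : ℕ) :
    ENNReal.ofReal (sh ((μ (⋃ i ∈ Finset.range (k + 2), P i ∩ Q)).toReal)) +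
        ∑' i, ENNReal.ofReal
          (sh ((μ (P (i + 1) \ ⋃ j ∈ Finset.range (k + 2), P j ∩ Q)).toReal)) ≤
      ENNReal.ofReal (sh ((μ (⋃ i ∈ Finset.range (k + 1), P i ∩ Q)).toReal)) +
        ∑' i, ENNReal.ofReal
          (sh ((μ (P (i + 1) \ ⋃ j ∈ Finset.range (k + 1), P j ∩ Q)).toReal)) := by
  obtain ⟨hm, hd, -⟩ := hP
  have hfm : IsFiniteMeasure μ := ⟨hμ.trans_lt ENNReal.one_lt_top⟩
  have hle1 : ∀ s : Set X, (μ s).toReal ≤ 1 := fun s =>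
    ENNReal.toReal_le_of_le_ofReal zero_le_one
      (by simpa using (measure_mono (Set.subset_univ s)).trans hμ)
  set A : Set X := ⋃ i ∈ Finset.range (k + 1), P i ∩ Q with hA
  have hB : (⋃ i ∈ Finset.range (k + 2), P i ∩ Q) = A ∪ (P (k + 1) ∩ Q) := by
    rw [hA, Finset.range_add_one (n := k + 1), Finset.set_biUnion_insert, Set.union_comm]
  rw [hB]
  have hdis : Disjoint A (P (k + 1)) := by
    rw [hA]
    simp only [Set.disjoint_iUnion_left]
    intro i hi
    have : i ≠ k + 1 := by
      have := Finset.mem_range.1 hi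
      omega
    exact (hd this).mono_left Set.inter_subset_left
  have hother : ∀ i, i ≠ k → P (i + 1) \ (A ∪ (P (k + 1) ∩ Q)) = P (i + 1) \ A := by
    intro i hi
    have h : Disjoint (P (i + 1)) (P (k + 1)) := hd (by omega)
    ext x
    have := fun hx => Set.disjoint_left.1 h (show x ∈ P (i + 1) from hx)
    simp only [Set.mem_diff, Set.mem_union, Set.mem_inter_iff]
    tauto
  have hk1 : P (k + 1) \ A = P (k + 1) := hdis.symm.sdiff_eq_left
  have hk2 : P (k + 1) \ (A ∪ (P (k + 1) ∩ Q)) = P (k + 1) \ Q := by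
    ext x
    have := fun hx => Set.disjoint_left.1 hdis (show x ∈ A from hx)
    simp only [Set.mem_diff, Set.mem_union, Set.mem_inter_iff]
    tauto
  have hmeas : (μ (A ∪ (P (k + 1) ∩ Q))).toReal
      = (μ A).toReal + (μ (P (k + 1) ∩ Q)).toReal := by
    rw [measure_union (hdis.mono_right Set.inter_subset_left) ((hm _).inter hQ),
      ENNReal.toReal_add (measure_ne_top _ _) (measure_ne_top _ _)]
  have hsplit : (μ (P (k + 1) \ Q)).toReal
      = (μ (P (k + 1))).toReal - (μ (P (k + 1) ∩ Q)).toReal := by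
    rw [← measure_inter_add_sdiff (P (k + 1)) hQ,
      ENNReal.toReal_add (measure_ne_top _ _) (measure_ne_top _ _)]
    ring
  have hP0 : P 0 ⊆ A := by
    intro x hx
    simp only [hA, Set.mem_iUnion]
    exact ⟨0, by simp, hx, hsub hx⟩
  have hpq : (μ (P (k + 1))).toReal ≤ (μ A).toReal :=
    ENNReal.toReal_mono (measure_ne_top _ _) ((hmax _).trans (measure_mono hP0))
  have hap : (μ (P (k + 1) ∩ Q)).toReal ≤ (μ (P (k + 1))).toReal :=
    ENNReal.toReal_mono (measure_ne_top _ _) (measure_mono Set.inter_subset_left)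
  have key := sh_exchange_aux ENNReal.toReal_nonneg hap hpq
  rw [← hmeas, ← hsplit] at key
  rw [ENNReal.tsum_eq_add_tsum_ite k, ENNReal.tsum_eq_add_tsum_ite
    (f := fun i => ENNReal.ofReal (sh ((μ (P (i + 1) \ A)).toReal))) k, hk1, hk2,
    ← add_assoc, ← add_assoc,
    ← ENNReal.ofReal_add (sh_nonneg_aux ENNReal.toReal_nonneg (hle1 _))
      (sh_nonneg_aux ENNReal.toReal_nonneg (hle1 _)),
    ← ENNReal.ofReal_add (sh_nonneg_aux ENNReal.toReal_nonneg (hle1 _))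
      (sh_nonneg_aux ENNReal.toReal_nonneg (hle1 _))]
  refine add_le_add (ENNReal.ofReal_le_ofReal key) (ENNReal.tsum_le_tsum fun i => ?_)
  by_cases hi : i = k
  · simp [hi]
  · simp [hi, hother i hi]
end
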